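/- Let μ ∈ ℝ and let Y₁(0), Y₂(0) be independent random variables each with Gaussian law N(μ, 1). For δ > 0 define treated outcomes Yᵢ = Yᵢ(0) + δ·Yᵢ(0) = (1 + δ)·Yᵢ(0). Then Y₁ − Y₂ has Gaussian law N(0, 2(1 + δ)²), and for every ι > 0 and every γ ∈ (0,1) there exists δ > 0 such that P(|Y₁ − Y₂| > 2ι) > γ. Consequently, the region obtained by inverting the family of sharp-null tests φ_c = 1{max_{i=1,2} |Yᵢ − Y₀ − c| > ι} (which is empty exactly when |Y₁ − Y₂| > 2ι) is empty with probability exceeding γ, and therefore is not a valid (1−γ)-prediction set for the sample average treatment effect. -/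

import Mathlib

open MeasureTheory ProbabilityTheory

/-!
The difference `Y₁ - Y₂ = (1 + δ) (Y₁(0) - Y₂(0))` is a linear image of two independent Gaussians,
which gives its law. The untreated difference `Y₁(0) - Y₂(0) ~ N(0, 2)` has no atom at `0`, so
continuity from below makes `|Y₁(0) - Y₂(0)|` exceed some `1 / (n + 1)` with probability above `γ`
(`exists_lt_measure_abs_sub`), and `δ = 2 ι (n + 1)` stretches that gap beyond `2 ι`. On this event
no `c` is within `ι` of both `Y₁ - Y₀` and `Y₂ - Y₀`, so the inverted region is empty there and covers
with probability less than `1 - γ`.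
-/

lemma map_sub_eq_gaussianReal {Ω : Type*} [MeasurableSpace Ω] {P : Measure Ω}
    {μ a : ℝ} {X Y : Ω → ℝ} (hX : Measurable X) (hY : Measurable Y) (hindep : IndepFun X Y P)
    (hlawX : Measure.map X P = gaussianReal μ 1) (hlawY : Measure.map Y P = gaussianReal μ 1) :
    Measure.map (fun ω => a * X ω - a * Y ω) P =
      gaussianReal 0 (Real.toNNReal (2 * a ^ 2)) := by
  have h1 := gaussianReal_const_mul (P := P) ⟨hX.aemeasurable, hlawX⟩ a
  have h2 := gaussianReal_const_mul (P := P) ⟨hY.aemeasurable, hlawY⟩ (-a)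
  have hi : IndepFun (fun ω => a * X ω) (fun ω => (-a) * Y ω) P :=
    hindep.comp (measurable_const_mul a) (measurable_const_mul (-a))
  have h := (gaussianReal_add_gaussianReal_of_indepFun hi h1.map_eq h2.map_eq)
  convert h using 2
  · funext ω
    simp only [Pi.add_apply]
    ring
  · ring
  · ext
    rw [Real.coe_toNNReal _ (by positivity)]
    push_cast
    ring

/-- A random variable whose law has no atom at `0` is bounded away from `0` with probability
arbitrarily close to `1`; here for the difference of two independent Gaussians. -/
lemma exists_lt_measure_abs_sub {Ω : Type*} [MeasurableSpace Ω] {P : Measure Ω}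
    [IsProbabilityMeasure P] {μ : ℝ} {X Y : Ω → ℝ} (hX : Measurable X) (hY : Measurable Y)
    (hindep : IndepFun X Y P)
    (hlawX : Measure.map X P = gaussianReal μ 1) (hlawY : Measure.map Y P = gaussianReal μ 1)
    {p : ENNReal} (hp : p < 1) :
    ∃ n : ℕ, p < P {ω | 1 / ((n : ℝ) + 1) < |X ω - Y ω|} := by
  have hlaw := map_sub_eq_gaussianReal (a := 1) hX hY hindep hlawX hlawY
  simp only [one_mul] at hlaw
  have hD : Measurable fun ω => X ω - Y ω := hX.sub hY
  have hv : Real.toNNReal (2 * 1 ^ 2) ≠ 0 := by norm_num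
  have hzero : P {ω | X ω - Y ω = 0} = 0 := by
    have h := Measure.map_apply (μ := P) hD (measurableSet_singleton (0 : ℝ))
    have := nullSingletonClass_gaussianReal (μ := 0) hv
    rw [hlaw, measure_singleton] at h
    exact h.symm
  have hmono : Monotone fun n : ℕ => {ω | 1 / ((n : ℝ) + 1) < |X ω - Y ω|} :=
    fun m n hmn ω (hω : 1 / ((m : ℝ) + 1) < |X ω - Y ω|) =>
      show 1 / ((n : ℝ) + 1) < |X ω - Y ω| from (Nat.one_div_le_one_div hmn).trans_lt hω
  have hunion : (⋃ n : ℕ, {ω | 1 / ((n : ℝ) + 1) < |X ω - Y ω|}) = {ω | X ω - Y ω = 0}ᶜ := by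
    ext ω
    simp only [Set.mem_iUnion, Set.mem_ofPred_eq, Set.mem_compl_iff]
    constructor
    · rintro ⟨n, hn⟩ h0
      rw [h0, abs_zero] at hn
      exact absurd hn (not_lt.2 (by positivity))
    · exact fun h => exists_nat_one_div_lt (abs_pos.2 h)
  have hsup := hmono.measure_iUnion (μ := P)
  have hone : P {ω | X ω - Y ω = 0}ᶜ = 1 := by
    rw [prob_compl_eq_one_iff₀ (NullMeasurableSet.of_null hzero), hzero]
  rw [hunion, hone] at hsup
  rw [hsup] at hp
  exact lt_iSup_iff.1 hp

/-- Counterexample: with two treated units having i.i.d. `N(μ,1)` untreated potential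
outcomes, a control outcome `Y₀ ~ N(μ,1)`, and treatment effects `αᵢ = δ·Yᵢ(0)` (so that
`Yᵢ = (1+δ)·Yᵢ(0)`), the difference `Y₁ - Y₂` is `N(0, 2(1+δ)²)`; for every `ι > 0` and
`γ ∈ (0,1)` one can pick `δ > 0` so that `P(|Y₁ - Y₂| > 2ι) > γ`, hence the region
obtained by inverting the sharp-null tests `φ_c = 1{maxᵢ |Yᵢ - Y₀ - c| > ι}` is empty
with probability exceeding `γ` and therefore is not a valid `(1-γ)`-prediction set for
the sample average treatment effect `(α₁ + α₂)/2`. -/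
theorem inversion_not_valid_prediction_set_counterexample
    {Ω : Type*} [MeasurableSpace Ω] (P : Measure Ω) [IsProbabilityMeasure P]
    (μ : ℝ) (Y01 Y02 Yc : Ω → ℝ)
    (h1meas : Measurable Y01) (h2meas : Measurable Y02) (hcmeas : Measurable Yc)
    (hindep : IndepFun Y01 Y02 P)
    (hlaw1 : Measure.map Y01 P = gaussianReal μ 1)
    (hlaw2 : Measure.map Y02 P = gaussianReal μ 1)
    (hlawc : Measure.map Yc P = gaussianReal μ 1)
    (ι : ℝ) (hι : 0 < ι) (γ : ℝ) (hγ : γ ∈ Set.Ioo (0 : ℝ) 1) :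
    (∀ δ > (0 : ℝ),
      Measure.map (fun ω => (1 + δ) * Y01 ω - (1 + δ) * Y02 ω) P =
        gaussianReal 0 (Real.toNNReal (2 * (1 + δ) ^ 2))) ∧
    ∃ δ > (0 : ℝ),
      ENNReal.ofReal γ <
        P {ω | 2 * ι < |(1 + δ) * Y01 ω - (1 + δ) * Y02 ω|} ∧
      ENNReal.ofReal γ <
        P {ω | {c : ℝ | max |(1 + δ) * Y01 ω - Yc ω - c|
            |(1 + δ) * Y02 ω - Yc ω - c| ≤ ι} = ∅} ∧
      ¬ (ENNReal.ofReal (1 - γ) ≤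
        P {ω | (δ * Y01 ω + δ * Y02 ω) / 2 ∈
          {c : ℝ | max |(1 + δ) * Y01 ω - Yc ω - c|
            |(1 + δ) * Y02 ω - Yc ω - c| ≤ ι}}) := by
  have hγ1 : ENNReal.ofReal γ < 1 := ENNReal.ofReal_lt_one.2 hγ.2
  refine ⟨fun δ _ => map_sub_eq_gaussianReal h1meas h2meas hindep hlaw1 hlaw2, ?_⟩
  obtain ⟨n, hn⟩ := exists_lt_measure_abs_sub h1meas h2meas hindep hlaw1 hlaw2 hγ1
  have hn0 : (0 : ℝ) < (n : ℝ) + 1 := by positivity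
  obtain ⟨δ, hδ⟩ : ∃ δ : ℝ, δ = 2 * ι * (n + 1) := ⟨_, rfl⟩
  have hδ0 : 0 < δ := by rw [hδ]; positivity
  have hgap : ENNReal.ofReal γ < P {ω | 2 * ι < |(1 + δ) * Y01 ω - (1 + δ) * Y02 ω|} := by
    refine hn.trans_le (measure_mono fun ω hω => ?_)
    simp only [Set.mem_ofPred_eq] at hω ⊢
    rw [← mul_sub, abs_mul, abs_of_pos (by linarith : 0 < 1 + δ)]
    rw [div_lt_iff₀ hn0] at hω
    have hpos : 0 ≤ |Y01 ω - Y02 ω| := abs_nonneg _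
    have hscale : 2 * ι * 1 < 2 * ι * (|Y01 ω - Y02 ω| * (n + 1)) :=
      mul_lt_mul_of_pos_left hω (by positivity)
    calc 2 * ι < δ * |Y01 ω - Y02 ω| := by rw [hδ]; linarith
      _ ≤ (1 + δ) * |Y01 ω - Y02 ω| := by linarith
  have hempty : ∀ ω, 2 * ι < |(1 + δ) * Y01 ω - (1 + δ) * Y02 ω| → ∀ c : ℝ,
      ¬ max |(1 + δ) * Y01 ω - Yc ω - c| |(1 + δ) * Y02 ω - Yc ω - c| ≤ ι := by
    intro ω hω c hc
    obtain ⟨ha, hb⟩ := max_le_iff.1 hc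
    rw [abs_le] at ha hb
    exact absurd hω (not_lt.2 (abs_le.2 ⟨by linarith, by linarith⟩))
  refine ⟨δ, hδ0, hgap, hgap.trans_le (measure_mono fun ω hω => ?_), not_le.2 ?_⟩
  · exact Set.eq_empty_iff_forall_notMem.2 (hempty ω hω)
  · have hmeas : MeasurableSet {ω | 2 * ι < |(1 + δ) * Y01 ω - (1 + δ) * Y02 ω|} :=
      measurableSet_lt measurable_const
        ((h1meas.const_mul _).sub (h2meas.const_mul _)).abs
    calc _ ≤ P {ω | 2 * ι < |(1 + δ) * Y01 ω - (1 + δ) * Y02 ω|}ᶜ :=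
          measure_mono fun ω hω hlt => hempty ω hlt _ hω
      _ = 1 - P {ω | 2 * ι < |(1 + δ) * Y01 ω - (1 + δ) * Y02 ω|} := prob_compl_eq_one_sub hmeas
      _ < 1 - ENNReal.ofReal γ :=
          ENNReal.sub_lt_of_lt_add prob_le_one <| by
            conv_lhs => rw [← tsub_add_cancel_of_le hγ1.le]
            exact ENNReal.add_lt_add_left (ENNReal.sub_ne_top ENNReal.one_ne_top) hgap
      _ = ENNReal.ofReal (1 - γ) := by
          rw [ENNReal.ofReal_sub _ hγ.1.le, ENNReal.ofReal_one]
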